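/- arXiv:1111.3778 — 5 statements merged into one kernel-verified Lean document; each statement's English description precedes it below -/
import Mathlib

section
/- Let a, b, c be integers with c ≠ 0 and b ≠ 0, and let α = (a + b√3)/c, ᾱ = (a − b√3)/c. If α is ambiguous, i.e., α·ᾱ < 0, then exactly one of C(α) and C²(α) is ambiguous and the other is totally negative. Precisely: either C(α)·C(ᾱ) < 0 and both C²(α) < 0 and C²(ᾱ) < 0, or C²(α)·C²(ᾱ) < 0 and both C(α) < 0 and C(ᾱ) < 0, and these two alternatives are mutually exclusive. -/
/-!
The map `C` permutes the intervals `(0, ∞) → (-∞, -1) → (-1, 0) → (0, ∞)` cyclically, so exactly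
one of `z`, `C z`, `C² z` is positive and the other two are negative whenever `z ≠ 0, -1`. If `α`
and `ᾱ` have opposite signs, then `C` and `C²` both make the positive one negative, while exactly
one of them makes the negative one positive. Irrationality of `√3` keeps `α` and `ᾱ` away from the
pole `-1` of `C²`.
-/

section OrderedField

variable {K : Type*} [Field K] [LinearOrder K] [IsStrictOrderedRing K] {x y : K}

theorem neg_one_add_div_self_pos_iff : 0 < -(1 + x) / x ↔ -1 < x ∧ x < 0 := by
  rw [div_pos_iff]
  grind

theorem neg_one_add_div_self_neg_iff : -(1 + x) / x < 0 ↔ x < -1 ∨ 0 < x := by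
  rw [div_neg_iff]
  grind

theorem neg_one_div_one_add_pos_iff : 0 < -1 / (1 + x) ↔ x < -1 := by
  rw [neg_div, neg_pos, one_div_neg, ← lt_neg_iff_add_neg']

theorem neg_one_div_one_add_neg_iff : -1 / (1 + x) < 0 ↔ -1 < x := by
  rw [neg_div, neg_lt_zero, one_div_pos, ← neg_lt_iff_pos_add']

theorem C_C2_ambiguous_general (hxy : x * y < 0) (hx : x ≠ -1) (hy : y ≠ -1) :
    Xor
      ((-(1 + x) / x) * (-(1 + y) / y) < 0 ∧ -1 / (1 + x) < 0 ∧ -1 / (1 + y) < 0)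
      ((-1 / (1 + x)) * (-1 / (1 + y)) < 0 ∧ -(1 + x) / x < 0 ∧ -(1 + y) / y < 0) := by
  wlog hpos : 0 < x generalizing x y
  · have hy_pos : 0 < y := pos_of_mul_neg_right hxy (not_lt.mp hpos)
    simpa only [mul_comm, and_comm] using this (mul_comm x y ▸ hxy) hy hx hy_pos
  have hy_neg : y < 0 := neg_of_mul_neg_right hxy hpos.le
  have hCx : -(1 + x) / x < 0 := neg_one_add_div_self_neg_iff.mpr (.inr hpos)
  have hC2x : -1 / (1 + x) < 0 :=
    neg_one_div_one_add_neg_iff.mpr (neg_one_lt_zero.trans hpos)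
  rcases hy.lt_or_gt with hy_lt | hy_gt
  · have hCy : -(1 + y) / y < 0 := neg_one_add_div_self_neg_iff.mpr (.inl hy_lt)
    have hC2y : 0 < -1 / (1 + y) := neg_one_div_one_add_pos_iff.mpr hy_lt
    exact .inr ⟨⟨mul_neg_of_neg_of_pos hC2x hC2y, hCx, hCy⟩, fun h ↦ hC2y.not_gt h.2.2⟩
  · have hCy : 0 < -(1 + y) / y := neg_one_add_div_self_pos_iff.mpr ⟨hy_gt, hy_neg⟩
    have hC2y : -1 / (1 + y) < 0 := neg_one_div_one_add_neg_iff.mpr hy_gt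
    exact .inl ⟨⟨mul_neg_of_neg_of_pos hCx hCy, hC2x, hC2y⟩, fun h ↦ hCy.not_gt h.2.2⟩

end OrderedField

theorem irrational_intCast_add_mul_div {r : ℝ} (hr : Irrational r) (a : ℤ) {b c : ℤ}
    (hb : b ≠ 0) (hc : c ≠ 0) : Irrational ((a + b * r) / c) :=
  ((hr.intCast_mul hb).intCast_add a).div_intCast hc

theorem irrational_intCast_sub_mul_div {r : ℝ} (hr : Irrational r) (a : ℤ) {b c : ℤ}
    (hb : b ≠ 0) (hc : c ≠ 0) : Irrational ((a - b * r) / c) :=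
  ((hr.intCast_mul hb).intCast_sub a).div_intCast hc

/-- If `α = (a + b√3)/c` is ambiguous (`α·ᾱ < 0`), then exactly
one of `C(α)` and `C²(α)` is ambiguous and the other is totally negative,
where `C(z) = -(1+z)/z`, `C²(z) = -1/(1+z)`, the conjugate of `C(α)` is `C(ᾱ)`
and the conjugate of `C²(α)` is `C²(ᾱ)`. -/
theorem C_C2_ambiguous (a b c : ℤ) (hc : c ≠ 0) (hb : b ≠ 0)
    (α αbar : ℝ)
    (hα : α = ((a : ℝ) + (b : ℝ) * Real.sqrt 3) / (c : ℝ))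
    (hαbar : αbar = ((a : ℝ) - (b : ℝ) * Real.sqrt 3) / (c : ℝ))
    (hamb : α * αbar < 0) :
    Xor'
      ((-(1 + α) / α) * (-(1 + αbar) / αbar) < 0 ∧
        -1 / (1 + α) < 0 ∧ -1 / (1 + αbar) < 0)
      ((-1 / (1 + α)) * (-1 / (1 + αbar)) < 0 ∧
        -(1 + α) / α < 0 ∧ -(1 + αbar) / αbar < 0) := by
  have hsqrt : Irrational (Real.sqrt 3) := Nat.prime_three.irrational_sqrt
  have hα_irr : Irrational α := hα ▸ irrational_intCast_add_mul_div hsqrt a hb hc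
  have hαbar_irr : Irrational αbar := hαbar ▸ irrational_intCast_sub_mul_div hsqrt a hb hc
  exact C_C2_ambiguous_general hamb (mod_cast hα_irr.ne_int (-1)) (mod_cast hαbar_irr.ne_int (-1))
end

section
/- Let a, b, c be integers with c ≠ 0 and b ≠ 0 such that c divides a² − 3b², and set d = (a² − 3b²)/c (note d ≠ 0 since √3 is irrational and b ≠ 0). Let α = (a + b√3)/c. Then C(α) = (−(a + d) + b√3)/d, and the d-parameter of C(α) is again an integer: d divides (a + d)² − 3b², with ((a + d)² − 3b²)/d = 2a + c + d. Moreover C²(α) = (−(a + c) + b√3)/(2a + c + d), and (2a + c + d) divides (a + c)² − 3b², with ((a + c)² − 3b²)/(2a + c + d) = c. -/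
/-!
Write `α = (a + t) / c` with `t = b√3`. The relation `c * d = a² - t² = (a + t) * (a - t)` says
that `1 / α = (a - t) / d`, hence `C(α) = -1 - 1 / α = (-(a + d) + t) / d`. So `C` replaces the
triple `(a, c, d)` by `(-(a + d), d, 2a + c + d)`, which satisfies the same relation, and doing this
twice gives `(-(a + c), 2a + c + d, c)`. No denominator vanishes, because `x² - 3b²` is the norm of
the nonzero element `x + b√3` of `ℤ[√3]` and `3` is not a square.
-/

/-- The generator `C` of the Picard group, acting on an arbitrary field instead of the projective
line; its pole at `0` is sent to `0` by division by zero. -/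
def picardC {K : Type*} [Field K] (z : K) : K :=
  -(1 + z) / z

theorem mul_two_mul_add_add_eq_sq_sub {R : Type*} [CommRing R] {a c d N : R}
    (h : c * d = a ^ 2 - N) : d * (2 * a + c + d) = (a + d) ^ 2 - N := by
  linear_combination h

theorem sq_sub_mul_sq_ne_zero {n b : ℤ} (hn : ¬ IsSquare n) (hb : b ≠ 0) (x : ℤ) :
    x ^ 2 - n * b ^ 2 ≠ 0 := by
  intro h
  have hnorm : Zsqrtd.norm (⟨x, b⟩ : ℤ√n) = 0 := by
    rw [Zsqrtd.norm_def]
    linear_combination h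
  have hzero := (Zsqrtd.norm_eq_zero (fun m hm ↦ hn ⟨m, hm⟩) _).mp hnorm
  exact hb (congrArg Zsqrtd.im hzero)

section Field

variable {K : Type*} [Field K]

theorem picardC_eq_neg_one_sub_inv {z : K} (hz : z ≠ 0) : picardC z = -1 - z⁻¹ := by
  rw [picardC]
  field_simp
  ring

theorem picardC_picardC {z : K} (hz : z ≠ 0) : picardC (picardC z) = -1 / (1 + z) := by
  have hnum : -(1 + picardC z) = z⁻¹ := by
    rw [picardC_eq_neg_one_sub_inv hz]
    ring
  rw [picardC, hnum, picardC, div_div_eq_mul_div, inv_mul_cancel₀ hz, div_neg, neg_div]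

variable {a c d t : K}

theorem add_ne_zero_of_mul_eq_sq_sub_sq (h : c * d = a ^ 2 - t ^ 2) (hc : c ≠ 0) (hd : d ≠ 0) :
    a + t ≠ 0 :=
  left_ne_zero_of_mul (sq_sub_sq a t ▸ h ▸ mul_ne_zero hc hd)

theorem picardC_add_div (h : c * d = a ^ 2 - t ^ 2) (hc : c ≠ 0) (hd : d ≠ 0) :
    picardC ((a + t) / c) = (-(a + d) + t) / d := by
  have hat : a + t ≠ 0 := add_ne_zero_of_mul_eq_sq_sub_sq h hc hd
  have hinv : ((a + t) / c)⁻¹ = (a - t) / d := by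
    rw [inv_div, div_eq_div_iff hat hd]
    linear_combination h
  rw [picardC_eq_neg_one_sub_inv (div_ne_zero hat hc), hinv]
  field_simp
  ring

theorem picardC_picardC_add_div (h : c * d = a ^ 2 - t ^ 2) (hc : c ≠ 0) (hd : d ≠ 0)
    (he : 2 * a + c + d ≠ 0) :
    picardC (picardC ((a + t) / c)) = (-(a + c) + t) / (2 * a + c + d) := by
  have hnext : d * (2 * a + c + d) = (-(a + d)) ^ 2 - t ^ 2 := by
    rw [neg_sq, mul_two_mul_add_add_eq_sq_sub h]
  rw [picardC_add_div h hc hd, picardC_add_div hnext hd he]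
  ring

end Field

theorem C_d_parameter_general {K : Type*} [Field K] [CharZero K] {n : ℤ} (hn : ¬ IsSquare n)
    {s : K} (hs : s ^ 2 = n) {a b c d : ℤ} (hb : b ≠ 0) (h : c * d = a ^ 2 - n * b ^ 2)
    {α : K} (hα : α = (a + b * s) / c) :
    d ≠ 0 ∧
    (-(1 + α) / α = ((-(a + d) : ℤ) + b * s) / d ∧
      d ∣ (a + d) ^ 2 - n * b ^ 2 ∧
      ((a + d) ^ 2 - n * b ^ 2) / d = 2 * a + c + d) ∧
    (-1 / (1 + α) = ((-(a + c) : ℤ) + b * s) / (2 * a + c + d : ℤ) ∧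
      (2 * a + c + d) ∣ (a + c) ^ 2 - n * b ^ 2 ∧
      ((a + c) ^ 2 - n * b ^ 2) / (2 * a + c + d) = c) := by
  have hC : d * (2 * a + c + d) = (a + d) ^ 2 - n * b ^ 2 := mul_two_mul_add_add_eq_sq_sub h
  have hCC : (2 * a + c + d) * c = (a + c) ^ 2 - n * b ^ 2 := by
    rw [← mul_two_mul_add_add_eq_sq_sub (mul_comm d c ▸ h)]
    ring
  obtain ⟨hc, hd⟩ := mul_ne_zero_iff.mp (h ▸ sq_sub_mul_sq_ne_zero hn hb a)
  have he : 2 * a + c + d ≠ 0 := left_ne_zero_of_mul (hCC ▸ sq_sub_mul_sq_ne_zero hn hb (a + c))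
  have hK : (c : K) * d = a ^ 2 - (b * s) ^ 2 := by
    rw [mul_pow, hs, mul_comm ((b : K) ^ 2)]
    exact_mod_cast h
  have hcK : (c : K) ≠ 0 := Int.cast_ne_zero.mpr hc
  have hdK : (d : K) ≠ 0 := Int.cast_ne_zero.mpr hd
  have heK : (2 * a + c + d : K) ≠ 0 := mod_cast he
  have hα₀ : α ≠ 0 := hα ▸ div_ne_zero (add_ne_zero_of_mul_eq_sq_sub_sq hK hcK hdK) hcK
  refine ⟨hd, ⟨?_, ⟨_, hC.symm⟩, Int.ediv_eq_of_eq_mul_right hd hC.symm⟩,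
    ?_, ⟨_, hCC.symm⟩, Int.ediv_eq_of_eq_mul_right he hCC.symm⟩
  · rw [← picardC, hα, picardC_add_div hK hcK hdK]
    push_cast
    rfl
  · rw [← picardC_picardC hα₀, hα, picardC_picardC_add_div hK hcK hdK heK]
    push_cast
    rfl

/-- If `c ∣ a² - 3b²` and `d = (a² - 3b²)/c`, then `d ≠ 0`,
`C(α) = (-(a+d) + b√3)/d` with integer d-parameter `((a+d)² - 3b²)/d = 2a+c+d`,
and `C²(α) = (-(a+c) + b√3)/(2a+c+d)` with integer d-parameter
`((a+c)² - 3b²)/(2a+c+d) = c`, where `α = (a + b√3)/c`, `C(z) = -(1+z)/z`,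
`C²(z) = -1/(1+z)`. -/
theorem C_d_parameter (a b c : ℤ) (hc : c ≠ 0) (hb : b ≠ 0)
    (hdvd : c ∣ a ^ 2 - 3 * b ^ 2) (d : ℤ) (hd : d = (a ^ 2 - 3 * b ^ 2) / c)
    (α : ℝ) (hα : α = ((a : ℝ) + (b : ℝ) * Real.sqrt 3) / (c : ℝ)) :
    d ≠ 0 ∧
    (-(1 + α) / α = ((-(a + d) : ℤ) + (b : ℝ) * Real.sqrt 3) / (d : ℝ) ∧
      d ∣ (a + d) ^ 2 - 3 * b ^ 2 ∧
      ((a + d) ^ 2 - 3 * b ^ 2) / d = 2 * a + c + d) ∧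
    (-1 / (1 + α) =
        ((-(a + c) : ℤ) + (b : ℝ) * Real.sqrt 3) / ((2 * a + c + d : ℤ) : ℝ) ∧
      (2 * a + c + d) ∣ (a + c) ^ 2 - 3 * b ^ 2 ∧
      ((a + c) ^ 2 - 3 * b ^ 2) / (2 * a + c + d) = c) := by
  have h : c * d = a ^ 2 - 3 * b ^ 2 := hd ▸ Int.mul_ediv_cancel' hdvd
  exact C_d_parameter_general Int.prime_three.irreducible.not_isSquare (by simp) hb h hα
end

section
/- Let k be a nonzero integer and let p, q, r, s be integers with p·s − q·r = 1. Then r·k√3 + s ≠ 0, and setting y = (p·k√3 + q)/(r·k√3 + s), a = q·s − 3p·r·k², c = s² − 3r²k², and d = q² − 3p²k², one has c ≠ 0, y = (a + k√3)/c, and a² − 3k² = c·d; in particular c divides a² − 3k², and if moreover y·((a − k√3)/c) < 0 (i.e., y is ambiguous) then a² < 3k². Hence every ambiguous number of the form (a + k√3)/c lying in the orbit of k√3 under the real fractional linear transformations with determinant 1 satisfies a² < 3k² and c ∣ a² − 3k². -/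
/-!
Put `D = 3k²` and work in `ℤ√D`, embedded in `ℝ` by `√D ↦ k√3`. With `α = q + p√D` and
`β = s + r√D`, the orbit point is `y = α / β = α β̄ / N(β)`, where `N(β) = c` is nonzero because `D`
is not a square, and `α β̄ = a + √D` because the determinant is `1`. Multiplicativity of the norm
gives `a² - D = N(α β̄) = N(α) N(β) = d c`, and the product of `y` with its conjugate is
`N(α β̄) / c²`, which has the sign of `a² - D`.
-/

theorem isSquare_mul_sq_iff {R : Type*} [CommRing R] [IsDomain R] [IsIntegrallyClosed R]
    {m k : R} (hk : k ≠ 0) : IsSquare (m * k ^ 2) ↔ IsSquare m := by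
  refine ⟨fun ⟨n, hn⟩ ↦ ?_, fun hm ↦ hm.mul (IsSquare.sq k)⟩
  have hdvd : k ^ 2 ∣ n ^ 2 := ⟨m, by linear_combination -hn⟩
  obtain ⟨t, rfl⟩ := (IsIntegrallyClosed.pow_dvd_pow_iff two_ne_zero).mp hdvd
  exact ⟨t, mul_right_cancel₀ (pow_ne_zero 2 hk) (by linear_combination hn)⟩

section

open Zsqrtd

variable {D : ℤ}

theorem zsqrtd_mk_mul_star_mk (p q r s : ℤ) :
    (⟨q, p⟩ : ℤ√D) * star ⟨s, r⟩ = ⟨q * s - D * p * r, p * s - q * r⟩ := by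
  ext <;> simp only [re_mul, im_mul, re_star, im_star] <;> ring

theorem zsqrtd_lift_mul_lift_star {R : Type*} [CommRing R] (θ : {x : R // x * x = (D : R)})
    (z : ℤ√D) : lift θ z * lift θ (star z) = z.norm := by
  rw [← map_mul, ← norm_eq_mul_conj, map_intCast]

theorem zsqrtd_lift_ne_zero {R : Type*} [CommRing R] [CharZero R]
    (θ : {x : R // x * x = (D : R)}) (hD : ¬IsSquare D) {z : ℤ√D} (hz : z ≠ 0) :
    lift θ z ≠ 0 :=
  (map_ne_zero_iff _ (lift_injective θ fun n hn ↦ hD ⟨n, hn⟩)).mpr hz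

theorem zsqrtd_lift_div_lift {K : Type*} [Field K] (θ : {x : K // x * x = (D : K)})
    (z : ℤ√D) {w : ℤ√D} (hw : lift θ (star w) ≠ 0) :
    lift θ z / lift θ w = lift θ (z * star w) / w.norm := by
  rw [map_mul, ← zsqrtd_lift_mul_lift_star θ w, mul_div_mul_right _ _ hw]

theorem zsqrtd_norm_neg_of_lift_div_mul_lift_star_div_neg {K : Type*} [Field K] [LinearOrder K]
    [IsStrictOrderedRing K] (θ : {x : K // x * x = (D : K)}) {z : ℤ√D} {c : K}
    (h : lift θ z / c * (lift θ (star z) / c) < 0) : z.norm < 0 := by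
  rw [div_mul_div_comm, zsqrtd_lift_mul_lift_star] at h
  by_contra! hz
  exact h.not_ge (div_nonneg (Int.cast_nonneg hz) (mul_self_nonneg c))

end

theorem orbit_ambiguous_general {K : Type*} [Field K] [LinearOrder K] [IsStrictOrderedRing K]
    {D : ℤ} (hD : ¬IsSquare D) {θ : K} (hθ : θ * θ = D) {p q r s : ℤ}
    (hdet : p * s - q * r = 1) {a c d : ℤ} (ha : a = q * s - D * p * r)
    (hc : c = s ^ 2 - D * r ^ 2) (hd : d = q ^ 2 - D * p ^ 2) :
    r * θ + s ≠ 0 ∧ c ≠ 0 ∧ (p * θ + q) / (r * θ + s) = (a + θ) / c ∧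
      a ^ 2 - D = c * d ∧ c ∣ a ^ 2 - D ∧
      ((a + θ) / c * ((a - θ) / c) < 0 → a ^ 2 < D) := by
  let φ : ℤ√D →+* K := Zsqrtd.lift ⟨θ, hθ⟩
  let α : ℤ√D := ⟨q, p⟩
  let β : ℤ√D := ⟨s, r⟩
  have hφ (x y : ℤ) : φ ⟨x, y⟩ = y * θ + x := add_comm _ _
  have hαβ : α * star β = ⟨a, 1⟩ := by rw [zsqrtd_mk_mul_star_mk, hdet, ha]
  have hβ : β ≠ 0 := fun h₀ ↦ by simpa [h₀] using congrArg Zsqrtd.im hαβ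
  have hφβ : φ β ≠ 0 := zsqrtd_lift_ne_zero _ hD hβ
  have hφβ' : φ (star β) ≠ 0 := zsqrtd_lift_ne_zero _ hD (star_ne_zero.mpr hβ)
  have hNα : α.norm = d := by rw [hd, Zsqrtd.norm_def]; ring
  have hNβ : β.norm = c := by rw [hc, Zsqrtd.norm_def]; ring
  have hNa : (⟨a, 1⟩ : ℤ√D).norm = a ^ 2 - D := by rw [Zsqrtd.norm_def]; ring
  have hcd : a ^ 2 - D = c * d := by
    rw [← hNa, ← hαβ, Zsqrtd.norm_mul, Zsqrtd.norm_conj, hNα, hNβ, mul_comm]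
  have hquot : φ α / φ β = φ ⟨a, 1⟩ / c := by rw [zsqrtd_lift_div_lift _ α hφβ', hαβ, hNβ]
  refine ⟨hφ s r ▸ hφβ, ?_, ?_, hcd, ⟨d, hcd⟩, fun hneg ↦ ?_⟩
  · rwa [← hNβ, Ne, Zsqrtd.norm_eq_zero fun n hn ↦ hD ⟨n, hn⟩]
  · simpa [hφ, α, β, add_comm] using hquot
  · rw [← sub_neg, ← hNa]
    apply zsqrtd_norm_neg_of_lift_div_mul_lift_star_div_neg ⟨θ, hθ⟩ (c := (c : K))
    simpa [sub_eq_add_neg] using hneg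

/-- For a nonzero integer `k` and integers `p, q, r, s` with
`ps - qr = 1`, one has `r·k√3 + s ≠ 0`, and with
`y = (p·k√3 + q)/(r·k√3 + s)`, `a = qs - 3prk²`, `c = s² - 3r²k²`,
`d = q² - 3p²k²`: `c ≠ 0`, `y = (a + k√3)/c`, `a² - 3k² = c·d` (so
`c ∣ a² - 3k²`), and if `y·((a - k√3)/c) < 0` then `a² < 3k²`. -/
theorem orbit_ambiguous (k : ℤ) (hk : k ≠ 0) (p q r s : ℤ)
    (hdet : p * s - q * r = 1) (a c d : ℤ)
    (ha : a = q * s - 3 * p * r * k ^ 2)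
    (hc : c = s ^ 2 - 3 * r ^ 2 * k ^ 2)
    (hd : d = q ^ 2 - 3 * p ^ 2 * k ^ 2) :
    ((r : ℝ) * ((k : ℝ) * Real.sqrt 3) + (s : ℝ) ≠ 0) ∧
    c ≠ 0 ∧
    ((p : ℝ) * ((k : ℝ) * Real.sqrt 3) + (q : ℝ)) /
        ((r : ℝ) * ((k : ℝ) * Real.sqrt 3) + (s : ℝ)) =
      ((a : ℝ) + (k : ℝ) * Real.sqrt 3) / (c : ℝ) ∧
    a ^ 2 - 3 * k ^ 2 = c * d ∧ c ∣ a ^ 2 - 3 * k ^ 2 ∧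
    ((((a : ℝ) + (k : ℝ) * Real.sqrt 3) / (c : ℝ)) *
        (((a : ℝ) - (k : ℝ) * Real.sqrt 3) / (c : ℝ)) < 0 →
      a ^ 2 < 3 * k ^ 2) := by
  have hD : ¬IsSquare (3 * k ^ 2) := (isSquare_mul_sq_iff hk).not.mpr Int.prime_three.not_isSquare
  have hθ : (k * √3 : ℝ) * (k * √3) = (3 * k ^ 2 : ℤ) := by
    push_cast
    linear_combination (k : ℝ) ^ 2 * Real.mul_self_sqrt (zero_le_three (α := ℝ))
  exact orbit_ambiguous_general hD hθ hdet (by rw [ha]; ring) (by rw [hc]; ring) (by rw [hd]; ring)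
end

section
/- Define the sets of real numbers S₂ = { x ∈ ℝ : there exist integers a, c with c ≠ 0, a² < 12, c divides a² − 12, and x = (a + 2√3)/c } and S₁ = { x ∈ ℝ : there exist integers a, c with c ≠ 0, a² < 3, c divides a² − 3, and x = (a + √3)/c }. Then the set S₂ \ S₁ has exactly 32 elements. -/
/-!
Multiplying numerator and denominator of `(a + √n) / c` by `k` gives `(k a + √(k² n)) / (k c)`,
so every ambiguous number of radicand `n` is also one of radicand `k² n`, and removing the former
from the latter amounts to subtracting cardinalities. As `√n` is irrational, an ambiguous number
determines its pair `(a, c)`, and such pairs are counted by the divisors `c` of `a² - n` for the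
finitely many `a` with `a² < n`. For `n = 3`, `k = 2` this gives `44 - 12 = 32`.
-/

/-- The ambiguous numbers `(a + √n) / c` with integer d-parameter `(a² - n) / c`. In the paper's
notation `S₁ = ambiguousNumbers 3` and, since `2√3 = √12`, `S₂ = ambiguousNumbers 12`. -/
def ambiguousNumbers (n : ℕ) : Set ℝ :=
  {x | ∃ a c : ℤ, c ≠ 0 ∧ a ^ 2 < n ∧ c ∣ a ^ 2 - n ∧ x = (a + √n) / c}

/-- The pairs `⟨a, c⟩` representing the elements `(a + √n) / c` of `ambiguousNumbers n`. A dependent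
sum makes their number a sum of divisor counts; a boundary value `a² = n` contributes nothing, as
`Int.divisors 0 = ∅`. -/
noncomputable def ambiguousPairs (n : ℕ) : Finset (Σ _ : ℤ, ℤ) :=
  (Finset.Icc (-Int.sqrt n) (Int.sqrt n)).sigma fun a ↦ (a ^ 2 - n : ℤ).divisors

theorem mem_ambiguousPairs {n : ℕ} {p : Σ _ : ℤ, ℤ} :
    p ∈ ambiguousPairs n ↔ p.1 ^ 2 < n ∧ p.2 ∣ p.1 ^ 2 - n := by
  rw [ambiguousPairs, Finset.mem_sigma, Finset.mem_Icc, ← abs_le,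
    Int.abs_le_sqrt_iff_sq_le n.cast_nonneg, Int.mem_divisors, sub_ne_zero, lt_iff_le_and_ne]
  tauto

theorem snd_ne_zero_of_mem_ambiguousPairs {n : ℕ} {p : Σ _ : ℤ, ℤ} (hp : p ∈ ambiguousPairs n) :
    p.2 ≠ 0 := by
  obtain ⟨hlt, hdvd⟩ := mem_ambiguousPairs.1 hp
  exact ne_zero_of_dvd_ne_zero (sub_ne_zero.2 hlt.ne) hdvd

theorem ambiguousNumbers_eq_image (n : ℕ) :
    ambiguousNumbers n =
      (fun p : Σ _ : ℤ, ℤ ↦ (p.1 + √n) / p.2) '' (ambiguousPairs n : Set (Σ _ : ℤ, ℤ)) := by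
  ext x
  constructor
  · rintro ⟨a, c, -, hlt, hdvd, rfl⟩
    exact ⟨⟨a, c⟩, mem_ambiguousPairs.2 ⟨hlt, hdvd⟩, rfl⟩
  · rintro ⟨⟨a, c⟩, hp, rfl⟩
    obtain ⟨hlt, hdvd⟩ := mem_ambiguousPairs.1 hp
    exact ⟨a, c, snd_ne_zero_of_mem_ambiguousPairs hp, hlt, hdvd, rfl⟩

theorem finite_ambiguousNumbers (n : ℕ) : (ambiguousNumbers n).Finite := by
  rw [ambiguousNumbers_eq_image]
  exact (ambiguousPairs n).finite_toSet.image _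

theorem eq_and_eq_of_add_irrational_div_eq {θ : ℝ} (hθ : Irrational θ) {a c a' c' : ℤ}
    (hc : c ≠ 0) (hc' : c' ≠ 0) (h : (a + θ) / c = (a' + θ) / c') : a = a' ∧ c = c' := by
  have hcR : (c : ℝ) ≠ 0 := Int.cast_ne_zero.2 hc
  rw [div_eq_div_iff hcR (Int.cast_ne_zero.2 hc')] at h
  obtain rfl : c = c' := by
    by_contra hne
    refine (hθ.mul_intCast (sub_ne_zero.2 (Ne.symm hne))).ne_int (a' * c - a * c') ?_
    push_cast
    linear_combination h
  have ha : (a : ℝ) = a' := add_right_cancel (mul_right_cancel₀ hcR h)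
  exact ⟨mod_cast ha, rfl⟩

theorem ncard_ambiguousNumbers {n : ℕ} (hn : ¬IsSquare n) :
    (ambiguousNumbers n).ncard = (ambiguousPairs n).card := by
  rw [ambiguousNumbers_eq_image, Set.InjOn.ncard_image, Set.ncard_coe_finset]
  rintro ⟨a, c⟩ hp ⟨a', c'⟩ hp' h
  obtain ⟨rfl, rfl⟩ := eq_and_eq_of_add_irrational_div_eq (irrational_sqrt_natCast_iff.2 hn)
    (snd_ne_zero_of_mem_ambiguousPairs hp) (snd_ne_zero_of_mem_ambiguousPairs hp') h
  rfl

theorem sqrt_natCast_sq_mul (k n : ℕ) : √((k ^ 2 * n : ℕ) : ℝ) = k * √n := by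
  rw [Nat.cast_mul, Nat.cast_pow, Real.sqrt_mul (by positivity), Real.sqrt_sq k.cast_nonneg]

theorem ambiguousNumbers_subset_sq_mul (n : ℕ) {k : ℕ} (hk : k ≠ 0) :
    ambiguousNumbers n ⊆ ambiguousNumbers (k ^ 2 * n) := by
  rintro _ ⟨a, c, hc, hlt, ⟨d, hd⟩, rfl⟩
  have hkZ : (k : ℤ) ≠ 0 := Nat.cast_ne_zero.2 hk
  refine ⟨k * a, k * c, mul_ne_zero hkZ hc, ?_, ⟨k * d, ?_⟩, ?_⟩
  · push_cast
    rw [mul_pow]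
    gcongr
  · push_cast
    linear_combination (k : ℤ) ^ 2 * hd
  · rw [sqrt_natCast_sq_mul]
    push_cast
    rw [← mul_add, mul_div_mul_left _ _ (Nat.cast_ne_zero.2 hk)]

theorem card_ambiguous_two_sqrt_three_general {n k : ℕ} (hn : ¬IsSquare n) (hk : k ≠ 0) :
    (ambiguousNumbers (k ^ 2 * n) \ ambiguousNumbers n).ncard =
      (ambiguousPairs (k ^ 2 * n)).card - (ambiguousPairs n).card := by
  have hkn : ¬IsSquare (k ^ 2 * n) := by
    rw [← irrational_sqrt_natCast_iff, sqrt_natCast_sq_mul]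
    exact (irrational_sqrt_natCast_iff.2 hn).natCast_mul hk
  rw [Set.ncard_sdiff (ambiguousNumbers_subset_sq_mul n hk) (finite_ambiguousNumbers n),
    ncard_ambiguousNumbers hkn, ncard_ambiguousNumbers hn]

/-- The set `S₂` of ambiguous numbers `(a + 2√3)/c` with integer
d-parameter (`c ≠ 0`, `a² < 12`, `c ∣ a² - 12`), with the set `S₁` of those of
the form `(a + √3)/c` (`c ≠ 0`, `a² < 3`, `c ∣ a² - 3`) removed, has exactly
32 elements. -/
theorem card_ambiguous_two_sqrt_three :
    ({x : ℝ | ∃ a c : ℤ, c ≠ 0 ∧ a ^ 2 < 12 ∧ c ∣ a ^ 2 - 12 ∧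
        x = ((a : ℝ) + 2 * Real.sqrt 3) / (c : ℝ)} \
      {x : ℝ | ∃ a c : ℤ, c ≠ 0 ∧ a ^ 2 < 3 ∧ c ∣ a ^ 2 - 3 ∧
        x = ((a : ℝ) + Real.sqrt 3) / (c : ℝ)}).ncard = 32 := by
  have hcard₁₂ : (ambiguousPairs (2 ^ 2 * 3)).card = 44 := by decide +kernel
  have hcard₃ : (ambiguousPairs 3).card = 12 := by decide +kernel
  have hsqrt : √(12 : ℝ) = 2 * √3 := by simpa using sqrt_natCast_sq_mul 2 3
  have hncard := card_ambiguous_two_sqrt_three_general Nat.prime_three.not_isSquare two_ne_zero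
  rw [hcard₁₂, hcard₃] at hncard
  simpa only [ambiguousNumbers, Nat.reducePow, Nat.reduceMul, Nat.cast_ofNat, hsqrt] using hncard
end

section
/- Let a, b, c be integers with c ≠ 0 and b ≠ 0 such that c divides a² − 3b², and set d = (a² − 3b²)/c. If α = (a + b√3)/c is ambiguous (equivalently a² < 3b²), then each of the four numbers B(α) = (a − b√3)/d, D(α) = (−a + b√3)/d, and whichever of C(α) = (−(a+d) + b√3)/d and C²(α) = (−(a+c) + b√3)/(2a+c+d) is ambiguous, is again of the form (a' + b'√3)/c' with a', c' ∈ ℤ, with the same value b' = ±b of the coefficient of √3 up to sign (b' = b for C(α), C²(α) and D(α), and b' = −b for B(α)), and with integer d-parameter (a'² − 3b²)/c'. -/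
/-!
Put `d = (a² - nb²)/c` and `α = (a + b√n)/c`. The form `f(u, v) = du² + 2auv + cv²` is
`c` times the norm of `uα + v`. Rationalising the denominator of `(pα + q)/(rα + t)` gives
the denominator `f(r, t)` and a numerator with rational part the polar form of `f` and with
`√n`-coefficient `(pt - qr)b`. The polar identity for `f` says that the new d-parameter is
`f(p, q)`, an integer. The maps `B`, `C`, `C²`, `D` are given by matrices of determinant `±1`,
and `f(r, t)` does not vanish because `n` is not a square.
-/

section NormForm

variable {R : Type*} [CommRing R]

/-- The binary quadratic form `c · N(uα + v)` attached to `α = (a + b√n)/c`, where `d` is the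
d-parameter of `α`. -/
def normForm (a c d u v : R) : R := d * u ^ 2 + 2 * a * u * v + c * v ^ 2

/-- The symmetric bilinear form with `polarNormForm a c d u v u v = normForm a c d u v`; it gives
the rational part of the numerator of `(pα + q)/(rα + t)` over the denominator
`normForm a c d r t`. -/
def polarNormForm (a c d p q r t : R) : R := d * p * r + a * (p * t + q * r) + c * q * t

theorem mul_normForm {a b c d n : R} (hd : a ^ 2 - n * b ^ 2 = c * d) (u v : R) :
    c * normForm a c d u v = (a * u + c * v) ^ 2 - n * (b * u) ^ 2 := by
  unfold normForm
  linear_combination -u ^ 2 * hd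

theorem polarNormForm_sq_sub {a b c d n : R} (hd : a ^ 2 - n * b ^ 2 = c * d) (p q r t : R) :
    polarNormForm a c d p q r t ^ 2 - n * ((p * t - q * r) * b) ^ 2 =
      normForm a c d r t * normForm a c d p q := by
  unfold polarNormForm normForm
  linear_combination (p * t - q * r) ^ 2 * hd

end NormForm

theorem normForm_ne_zero {a b c d n : ℤ} (hn : ¬IsSquare n) (hc : c ≠ 0) (hb : b ≠ 0)
    (hd : a ^ 2 - n * b ^ 2 = c * d) {u v : ℤ} (huv : u ≠ 0 ∨ v ≠ 0) :
    normForm a c d u v ≠ 0 := by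
  intro hzero
  have hnorm : (⟨a * u + c * v, b * u⟩ : ℤ√n).norm = 0 := by
    rw [Zsqrtd.norm_def]
    linear_combination c * hzero - mul_normForm hd u v
  obtain ⟨hre, him⟩ := Zsqrtd.ext_iff.1 <|
    (Zsqrtd.norm_eq_zero (fun k hk ↦ hn ⟨k, hk⟩) _).1 hnorm
  have hu : u = 0 := (mul_eq_zero.1 him).resolve_left hb
  have hv : v = 0 := by simpa [hu, hc] using hre
  exact huv.elim (· hu) (· hv)

section Field

variable {K : Type*} [Field K]

theorem moebius_div_eq {a b c d n s : K} (hs : s ^ 2 = n) (hc : c ≠ 0)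
    (hd : a ^ 2 - n * b ^ 2 = c * d) (p q : K) {r t : K} (hrt : normForm a c d r t ≠ 0) :
    (p * ((a + b * s) / c) + q) / (r * ((a + b * s) / c) + t) =
      (polarNormForm a c d p q r t + (p * t - q * r) * b * s) / normForm a c d r t := by
  set x := (a + b * s) / c with hx
  have hcx : c * x = a + b * s := mul_div_cancel₀ _ hc
  have hmul (u v : K) : (u * x + v) * (a * r + c * t - b * r * s) =
      polarNormForm a c d u v r t + (u * t - v * r) * b * s := by
    refine mul_left_cancel₀ hc ?_
    unfold polarNormForm
    linear_combination u * (a * r + c * t - b * r * s) * hcx + u * r * hd - u * r * b ^ 2 * hs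
  have hnorm : (r * x + t) * (a * r + c * t - b * r * s) = normForm a c d r t := by
    rw [hmul, polarNormForm, normForm]
    ring
  rw [← hnorm] at hrt ⊢
  rw [← hmul, mul_div_mul_right _ _ (right_ne_zero_of_mul hrt)]

/-- `x = (a + bs)/c` for integers `a` and `c ≠ 0` with integral d-parameter `(a² - nb²)/c`.
The element `s` plays the role of `√n`. -/
def HasIntegralForm (n : ℤ) (s : K) (b : ℤ) (x : K) : Prop :=
  ∃ a c : ℤ, c ≠ 0 ∧ x = (a + b * s) / c ∧ c ∣ a ^ 2 - n * b ^ 2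

theorem orbit_form_invariant_general [CharZero K] {n b : ℤ} {s x : K} (hn : ¬IsSquare n)
    (hs : s ^ 2 = n) (hb : b ≠ 0) (hx : HasIntegralForm n s b x) (p q : ℤ) {r t : ℤ}
    (hrt : r ≠ 0 ∨ t ≠ 0) :
    HasIntegralForm n s ((p * t - q * r) * b) ((p * x + q) / (r * x + t)) := by
  obtain ⟨a, c, hc, rfl, d, hd⟩ := hx
  have hf : normForm a c d r t ≠ 0 := normForm_ne_zero hn hc hb hd hrt
  have hcast : ((normForm a c d r t : ℤ) : K) = normForm (a : K) c d r t := by simp [normForm]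
  refine ⟨polarNormForm a c d p q r t, normForm a c d r t, hf, ?_,
    Dvd.intro _ (polarNormForm_sq_sub hd p q r t).symm⟩
  rw [hcast, moebius_div_eq hs (Int.cast_ne_zero.2 hc) (mod_cast hd) _ _
    (hcast ▸ Int.cast_ne_zero.2 hf)]
  simp [polarNormForm]

end Field

/-- If `α = (a + b√3)/c` is ambiguous with `c ∣ a² - 3b²` and
`d = (a² - 3b²)/c`, then `B(α) = 1/α`, `D(α) = -1/α`, and whichever of
`C(α) = -(1+α)/α` and `C²(α) = -1/(1+α)` is ambiguous, is again of the form
`(a' + b'√3)/c'` with `a', c' ∈ ℤ`, `b' = -b` for `B(α)` and `b' = b` for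
`D(α)`, `C(α)`, `C²(α)`, and with integer d-parameter `(a'² - 3b²)/c'`. -/
theorem orbit_form_invariant (a b c : ℤ) (hc : c ≠ 0) (hb : b ≠ 0)
    (hdvd : c ∣ a ^ 2 - 3 * b ^ 2) (d : ℤ) (hd : d = (a ^ 2 - 3 * b ^ 2) / c)
    (α αbar : ℝ)
    (hα : α = ((a : ℝ) + (b : ℝ) * Real.sqrt 3) / (c : ℝ))
    (hαbar : αbar = ((a : ℝ) - (b : ℝ) * Real.sqrt 3) / (c : ℝ))
    (hamb : α * αbar < 0) :
    (∃ a' c' : ℤ, c' ≠ 0 ∧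
      1 / α = ((a' : ℝ) + ((-b : ℤ) : ℝ) * Real.sqrt 3) / (c' : ℝ) ∧
      c' ∣ a' ^ 2 - 3 * b ^ 2) ∧
    (∃ a' c' : ℤ, c' ≠ 0 ∧
      -1 / α = ((a' : ℝ) + (b : ℝ) * Real.sqrt 3) / (c' : ℝ) ∧
      c' ∣ a' ^ 2 - 3 * b ^ 2) ∧
    ((-(1 + α) / α) * (-(1 + αbar) / αbar) < 0 →
      ∃ a' c' : ℤ, c' ≠ 0 ∧
        -(1 + α) / α = ((a' : ℝ) + (b : ℝ) * Real.sqrt 3) / (c' : ℝ) ∧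
        c' ∣ a' ^ 2 - 3 * b ^ 2) ∧
    ((-1 / (1 + α)) * (-1 / (1 + αbar)) < 0 →
      ∃ a' c' : ℤ, c' ≠ 0 ∧
        -1 / (1 + α) = ((a' : ℝ) + (b : ℝ) * Real.sqrt 3) / (c' : ℝ) ∧
        c' ∣ a' ^ 2 - 3 * b ^ 2) := by
  have hmoebius (p q : ℤ) {r t : ℤ} (hrt : r ≠ 0 ∨ t ≠ 0) :=
    orbit_form_invariant_general (s := Real.sqrt 3) Int.prime_three.irreducible.not_isSquare
      (by simp) hb ⟨a, c, hc, hα, hdvd⟩ p q hrt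
  refine ⟨?_, ?_, fun _ ↦ ?_, fun _ ↦ ?_⟩
  · simpa [HasIntegralForm] using hmoebius 0 1 (r := 1) (t := 0) (by simp)
  · simpa [HasIntegralForm] using hmoebius 0 (-1) (r := 1) (t := 0) (by simp)
  · simpa [HasIntegralForm, add_comm] using hmoebius (-1) (-1) (r := 1) (t := 0) (by simp)
  · simpa [HasIntegralForm, add_comm] using hmoebius 0 (-1) (r := 1) (t := 1) (by simp)
end
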